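/- arXiv:2009.09488 — 6 statements merged into one kernel-verified Lean document; each statement's English description precedes it below -/
import Mathlib

section
/- Let K be a positive semiring, let R and R₀ be K-relations over a finite set X of attributes, and let S and S₀ be K-relations over a finite set Y of attributes. If R ≡ R₀ and S ≡ S₀, then R ⋈ S ≡ R₀ ⋈ S₀ (the join is well-defined up to equivalence). -/
open Finsupp

variable {A : Type*} [DecidableEq A]

/-- An `X`-tuple: a function assigning to each attribute `a ∈ X` an element of its domain. -/
def Tup (dom : A → Type*) (X : Finset A) : Type _ := ∀ a ∈ X, dom a

/-- Projection (restriction) of an `X`-tuple to `Y ⊆ X`. -/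
def restr (dom : A → Type*) {X Y : Finset A} (h : Y ⊆ X) (t : Tup dom X) : Tup dom Y :=
  fun a ha => t a (h ha)

/-- The marginal `R[Y]` of a `K`-relation `R` over `X`, for `Y ⊆ X`. -/
noncomputable def marg {dom : A → Type*} {K : Type*} [AddCommMonoid K] {X Y : Finset A}
    (h : Y ⊆ X) (R : Tup dom X →₀ K) : Tup dom Y →₀ K :=
  Finsupp.mapDomain (restr dom h) R

/-- Equivalence up to normalization of two `K`-relations over the same attribute set. -/
def KEquiv {dom : A → Type*} {K : Type*} [MulZeroClass K] {X : Finset A}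
    (R S : Tup dom X →₀ K) : Prop :=
  ∃ a b : K, a ≠ 0 ∧ b ≠ 0 ∧ ∀ t, a * R t = b * S t

/-- Merge an `X`-tuple and a `Y`-tuple into an `X ∪ Y`-tuple (values from the first argument
on `X`). -/
def merge {dom : A → Type*} {X Y : Finset A} (r : Tup dom X) (s : Tup dom Y) :
    Tup dom (X ∪ Y) :=
  fun a ha => if h : a ∈ X then r a h else s a ((Finset.mem_union.mp ha).resolve_left h)

/-- The correcting factor `c_S(u) = ∏_{v ∈ S[Z]', v ≠ u} S[Z](v)`. -/
noncomputable def cFactor {dom : A → Type*} {K : Type*} [CommSemiring K] {Y Z : Finset A}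
    (h : Z ⊆ Y) (S : Tup dom Y →₀ K) (u : Tup dom Z) : K :=
  haveI := Classical.decEq (Tup dom Z)
  ∏ v ∈ (marg h S).support.erase u, (marg h S) v

/-- The join of a `K`-relation over `X` and a `K`-relation over `Y`:
`(R ⋈ S)(t) = R(t[X])·S(t[Y])·c_S(t[X ∩ Y])`. -/
noncomputable def kjoin {dom : A → Type*} {K : Type*} [CommSemiring K] {X Y : Finset A}
    (R : Tup dom X →₀ K) (S : Tup dom Y →₀ K) : Tup dom (X ∪ Y) →₀ K :=
  haveI := Classical.decEq (Tup dom (X ∪ Y))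
  Finsupp.onFinset ((R.support ×ˢ S.support).image fun p => merge p.1 p.2)
    (fun t => R (restr dom Finset.subset_union_left t) *
      S (restr dom Finset.subset_union_right t) *
      cFactor Finset.inter_subset_right S (restr dom Finset.inter_subset_union t))
    (by
      intro t ht
      have hR : R (restr dom Finset.subset_union_left t) ≠ 0 :=
        left_ne_zero_of_mul (left_ne_zero_of_mul ht)
      have hS : S (restr dom Finset.subset_union_right t) ≠ 0 :=
        right_ne_zero_of_mul (left_ne_zero_of_mul ht)
      refine Finset.mem_image.mpr ⟨(restr dom Finset.subset_union_left t,
        restr dom Finset.subset_union_right t),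
        Finset.mem_product.mpr ⟨Finsupp.mem_support_iff.mpr hR, Finsupp.mem_support_iff.mpr hS⟩,
        ?_⟩
      funext a ha
      by_cases h : a ∈ X <;> simp [merge, restr, h])

/-- Two `K`-relations (over possibly different attribute sets) are consistent if a single
`K`-relation over the union has marginals equivalent to each of them. -/
def Consistent {dom : A → Type*} {K : Type*} [CommSemiring K] {X Y : Finset A}
    (R : Tup dom X →₀ K) (S : Tup dom Y →₀ K) : Prop :=
  ∃ T : Tup dom (X ∪ Y) →₀ K,
    KEquiv (marg Finset.subset_union_left T) R ∧ KEquiv (marg Finset.subset_union_right T) S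

theorem marg_ne_zero_aux {A : Type*} [DecidableEq A] {dom : A → Type*} {K : Type*}
    [CommSemiring K] (hplus : ∀ a b : K, a + b = 0 → a = 0 ∧ b = 0) {Y Z : Finset A}
    (h : Z ⊆ Y) (S : Tup dom Y →₀ K) (t : Tup dom Y) (ht : S t ≠ 0) :
    marg h S (restr dom h t) ≠ 0 := by
  classical
  intro h0
  apply ht
  unfold marg Finsupp.mapDomain at h0
  rw [Finsupp.sum_apply, Finsupp.sum,
    ← Finset.add_sum_erase _ _ (Finsupp.mem_support_iff.mpr ht)] at h0
  simpa using (hplus _ _ h0).1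

theorem marg_scale_aux {A : Type*} [DecidableEq A] {dom : A → Type*} {K : Type*}
    [CommSemiring K] {Y Z : Finset A} (h : Z ⊆ Y) (S S₀ : Tup dom Y →₀ K) (a b : K)
    (hS : ∀ t, a * S t = b * S₀ t) (u : Tup dom Z) : a * marg h S u = b * marg h S₀ u := by
  have e : a • S = b • S₀ := by
    ext t
    simpa using hS t
  have e2 : a • marg h S = b • marg h S₀ := by
    unfold marg
    rw [← Finsupp.mapDomain_smul, ← Finsupp.mapDomain_smul, e]
  simpa using DFunLike.congr_fun e2 u

theorem cFactor_scale_aux {A : Type*} [DecidableEq A] {dom : A → Type*} {K : Type*}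
    [CommSemiring K] [NoZeroDivisors K] {Y Z : Finset A} (h : Z ⊆ Y) (S S₀ : Tup dom Y →₀ K)
    (a b : K) (ha : a ≠ 0) (hb : b ≠ 0)
    (hS : ∀ t, a * S t = b * S₀ t) (u : Tup dom Z) (hu : marg h S u ≠ 0) :
    a ^ ((marg h S).support.card - 1) * cFactor h S u =
      b ^ ((marg h S).support.card - 1) * cFactor h S₀ u := by
  have hm := marg_scale_aux h S S₀ a b hS
  have hsupp : (marg h S₀).support = (marg h S).support := by
    ext v
    have := hm v
    rw [Finsupp.mem_support_iff, Finsupp.mem_support_iff, not_iff_not]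
    constructor
    · intro h0
      rw [h0, mul_zero] at this
      exact (mul_eq_zero.mp this).resolve_left ha
    · intro h0
      rw [h0, mul_zero] at this
      exact (mul_eq_zero.mp this.symm).resolve_left hb
  unfold cFactor
  rw [hsupp]
  letI := Classical.decEq (Tup dom Z)
  have hc := Finset.card_erase_of_mem (Finsupp.mem_support_iff.mpr hu)
  rw [← hc, ← Finset.prod_const, ← Finset.prod_const, ← Finset.prod_mul_distrib,
    ← Finset.prod_mul_distrib]
  exact Finset.prod_congr rfl fun v _ => hm v

/-- The join of K-relations over a positive semiring is well-defined up to equivalence. -/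
theorem statement2 {A : Type*} [DecidableEq A] (dom : A → Type*) (K : Type*)
    [CommSemiring K] [Nontrivial K] [NoZeroDivisors K]
    (hplus : ∀ a b : K, a + b = 0 → a = 0 ∧ b = 0)
    (X Y : Finset A) (R R₀ : Tup dom X →₀ K) (S S₀ : Tup dom Y →₀ K)
    (hR : KEquiv R R₀) (hS : KEquiv S S₀) :
    KEquiv (kjoin R S) (kjoin R₀ S₀) := by
  obtain ⟨a, b, ha, hb, hR⟩ := hR
  obtain ⟨c, d, hc, hd, hS⟩ := hS
  set n := (marg (Finset.inter_subset_right : X ∩ Y ⊆ Y) S).support.card - 1 with hn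
  refine ⟨a * c * c ^ n, b * d * d ^ n, mul_ne_zero (mul_ne_zero ha hc) (pow_ne_zero _ hc),
    mul_ne_zero (mul_ne_zero hb hd) (pow_ne_zero _ hd), fun t => ?_⟩
  simp only [kjoin, Finsupp.onFinset_apply]
  have h1 := hR (restr dom Finset.subset_union_left t)
  have h2 := hS (restr dom Finset.subset_union_right t)
  by_cases h0 : S (restr dom Finset.subset_union_right t) = 0
  · have h0' : S₀ (restr dom Finset.subset_union_right t) = 0 := by
      rw [h0, mul_zero] at h2
      exact (mul_eq_zero.mp h2.symm).resolve_left hd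
    rw [h0, h0']
    simp
  · have h3 := cFactor_scale_aux (Finset.inter_subset_right : X ∩ Y ⊆ Y) S S₀ c d hc hd hS
      (restr dom Finset.inter_subset_union t)
      (marg_ne_zero_aux hplus (Finset.inter_subset_right : X ∩ Y ⊆ Y) S
        (restr dom Finset.subset_union_right t) h0)
    rw [← hn] at h3
    calc _ = (a * R (restr dom Finset.subset_union_left t)) *
          (c * S (restr dom Finset.subset_union_right t)) *
          (c ^ n * cFactor Finset.inter_subset_right S
            (restr dom Finset.inter_subset_union t)) := by ring
      _ = _ := by rw [h1, h2, h3]; ring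
end

section
/- Let K be a positive semiring, let R be a K-relation over a finite set X of attributes and S a K-relation over a finite set Y of attributes. Then the support of the join R ⋈ S equals the ordinary join of the supports: (R ⋈ S)' = R' ⋈ S'. -/
open Finsupp

variable {A : Type*} [DecidableEq A]

/-- The support of the join of two K-relations is the ordinary join of their supports. -/
theorem statement3 {A : Type*} [DecidableEq A] (dom : A → Type*) (K : Type*)
    [CommSemiring K] [Nontrivial K] [NoZeroDivisors K]
    (hplus : ∀ a b : K, a + b = 0 → a = 0 ∧ b = 0)
    (X Y : Finset A) (R : Tup dom X →₀ K) (S : Tup dom Y →₀ K) :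
    ((kjoin R S).support : Set (Tup dom (X ∪ Y))) =
      {t | restr dom Finset.subset_union_left t ∈ R.support ∧
           restr dom Finset.subset_union_right t ∈ S.support} := by
  ext t
  have hc : cFactor Finset.inter_subset_right S
      (restr dom (Finset.inter_subset_union (s := X) (t := Y)) t) ≠ 0 := by
    unfold cFactor
    refine Finset.prod_ne_zero_iff.mpr ?_
    intro v hv
    letI := Classical.decEq (Tup dom (X ∩ Y))
    exact Finsupp.mem_support_iff.mp (Finset.mem_of_mem_erase hv)
  have hk : kjoin R S t = R (restr dom Finset.subset_union_left t) *
      S (restr dom Finset.subset_union_right t) *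
      cFactor Finset.inter_subset_right S (restr dom Finset.inter_subset_union t) := rfl
  rw [Finset.mem_coe, Finsupp.mem_support_iff, hk, Set.mem_ofPred_eq,
    Finsupp.mem_support_iff, Finsupp.mem_support_iff, mul_ne_zero_iff, mul_ne_zero_iff]
  exact ⟨fun h => h.1, fun h => ⟨h, hc⟩⟩
end

section
/- Let K be a positive semiring, let R be a K-relation over a finite set X of attributes and S a K-relation over a finite set Y of attributes, and let Z = X ∩ Y. For every X-tuple r in the left semijoin R' ⋉ S' := (R' ⋈ S')[X] of the supports, the marginal of the join satisfies (R ⋈ S)[X](r) = c*_{S,Z} · R(r), where c*_{S,Z} = Π_{v ∈ S[Z]'} S[Z](v). -/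
open Finsupp

variable {A : Type*} [DecidableEq A]

theorem aux_marg_apply {A : Type*} [DecidableEq A] {dom : A → Type*} {K : Type*} [AddCommMonoid K]
    {X Y : Finset A} (h : Y ⊆ X) (R : Tup dom X →₀ K) (u : Tup dom Y)
    [DecidablePred fun t : Tup dom X => restr dom h t = u] :
    marg h R u = ∑ t ∈ R.support.filter (fun t => restr dom h t = u), R t := by
  classical
  unfold marg
  rw [Finsupp.mapDomain, Finsupp.sum_apply, Finsupp.sum, Finset.sum_filter]
  refine Finset.sum_congr rfl fun t _ => ?_
  rw [Finsupp.single_apply]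

theorem aux_sum_eq_zero {ι K : Type*} [AddCommMonoid K]
    (hplus : ∀ a b : K, a + b = 0 → a = 0 ∧ b = 0) (s : Finset ι) (f : ι → K)
    (h : ∑ i ∈ s, f i = 0) (i : ι) (hi : i ∈ s) : f i = 0 := by
  classical
  rw [← Finset.add_sum_erase s f hi] at h
  exact (hplus _ _ h).1

/-- For every tuple  in the left semijoin of the supports, the marginal of the join on 
at  equals  where  and . -/
theorem statement4 {A : Type*} [DecidableEq A] (dom : A → Type*) (K : Type*)
    [CommSemiring K] [Nontrivial K] [NoZeroDivisors K]
    (hplus : ∀ a b : K, a + b = 0 → a = 0 ∧ b = 0)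
    (X Y : Finset A) (R : Tup dom X →₀ K) (S : Tup dom Y →₀ K) (r : Tup dom X)
    (hr : ∃ t : Tup dom (X ∪ Y),
      restr dom Finset.subset_union_left t ∈ R.support ∧
      restr dom Finset.subset_union_right t ∈ S.support ∧
      restr dom Finset.subset_union_left t = r) :
    marg Finset.subset_union_left (kjoin R S) r =
      (∏ v ∈ (marg (Finset.inter_subset_right : X ∩ Y ⊆ Y) S).support,
        marg (Finset.inter_subset_right : X ∩ Y ⊆ Y) S v) * R r := by
  classical
  obtain ⟨t₀, hR, hS, rfl⟩ := hr
  set r := restr dom Finset.subset_union_left t₀ with hrdef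
  set u : Tup dom (X ∩ Y) := restr dom Finset.inter_subset_union t₀ with hu
  have hR0 : R r ≠ 0 := Finsupp.mem_support_iff.mp hR
  have hc : cFactor (Finset.inter_subset_right : X ∩ Y ⊆ Y) S u ≠ 0 := by
    unfold cFactor
    refine Finset.prod_ne_zero_iff.mpr fun v hv => ?_
    exact Finsupp.mem_support_iff.mp (Finset.mem_of_mem_erase hv)
  have hmem : u ∈ (marg (Finset.inter_subset_right : X ∩ Y ⊆ Y) S).support := by
    rw [Finsupp.mem_support_iff, aux_marg_apply]
    intro h0
    exact Finsupp.mem_support_iff.mp hS (aux_sum_eq_zero hplus _ _ h0 _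
      (Finset.mem_filter.mpr ⟨hS, rfl⟩))
  have hprod : (∏ v ∈ (marg (Finset.inter_subset_right : X ∩ Y ⊆ Y) S).support,
        marg (Finset.inter_subset_right : X ∩ Y ⊆ Y) S v) =
      marg (Finset.inter_subset_right : X ∩ Y ⊆ Y) S u *
        cFactor (Finset.inter_subset_right : X ∩ Y ⊆ Y) S u := by
    unfold cFactor
    rw [← Finset.mul_prod_erase _ _ hmem]
  have hjoin : ∀ t : Tup dom (X ∪ Y), kjoin R S t =
      R (restr dom Finset.subset_union_left t) * S (restr dom Finset.subset_union_right t) *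
      cFactor Finset.inter_subset_right S (restr dom Finset.inter_subset_union t) :=
    fun t => rfl
  have hZ : ∀ t : Tup dom (X ∪ Y), restr dom Finset.subset_union_left t = r →
      restr dom (Finset.inter_subset_union : X ∩ Y ⊆ X ∪ Y) t = u := by
    intro t ht
    funext a ha
    exact congrFun (congrFun ht a) (Finset.mem_inter.mp ha).1
  have hmX : ∀ s : Tup dom Y, restr dom Finset.subset_union_left (merge r s) = r := by
    intro s
    funext a ha
    simp [restr, merge, ha]
  have hmY : ∀ s : Tup dom Y, restr dom (Finset.inter_subset_right : X ∩ Y ⊆ Y) s = u →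
      restr dom Finset.subset_union_right (merge r s) = s := by
    intro s hs
    funext a ha
    by_cases h : a ∈ X
    · have := congrFun (congrFun hs a) (Finset.mem_inter.mpr ⟨h, ha⟩)
      simp only [restr, merge, h, dif_pos]
      exact this.symm
    · simp [restr, merge, h]
  rw [hprod, aux_marg_apply, aux_marg_apply, Finset.sum_mul, Finset.sum_mul]
  refine Finset.sum_nbij' (fun t => restr dom Finset.subset_union_right t)
    (fun s => merge r s) ?_ ?_ ?_ ?_ ?_
  · intro t ht
    obtain ⟨h1, h2⟩ := Finset.mem_filter.mp ht
    rw [Finsupp.mem_support_iff, hjoin] at h1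
    exact Finset.mem_filter.mpr ⟨Finsupp.mem_support_iff.mpr
      (right_ne_zero_of_mul (left_ne_zero_of_mul h1)), hZ t h2⟩
  · intro s hs
    obtain ⟨h1, h2⟩ := Finset.mem_filter.mp hs
    refine Finset.mem_filter.mpr ⟨?_, hmX s⟩
    rw [Finsupp.mem_support_iff, hjoin, hmX, hmY s h2, hZ _ (hmX s)]
    exact mul_ne_zero (mul_ne_zero hR0 (Finsupp.mem_support_iff.mp h1)) hc
  · intro t ht
    obtain ⟨h1, h2⟩ := Finset.mem_filter.mp ht
    funext a ha
    by_cases h : a ∈ X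
    · simp only [merge, h, dif_pos]
      exact (congrFun (congrFun h2 a) h).symm
    · simp [restr, merge, h]
  · intro s hs
    exact hmY s (Finset.mem_filter.mp hs).2
  · intro t ht
    obtain ⟨h1, h2⟩ := Finset.mem_filter.mp ht
    rw [hjoin, h2, hZ t h2]
    ring
end

section
/- Let K be a positive semiring, let R be a K-relation over a finite set X of attributes and S a K-relation over a finite set Y of attributes. The following statements are equivalent: (a) R and S are consistent; (b) R[X ∩ Y] ≡ S[X ∩ Y]; (c) the supports R' and S' are consistent as ordinary relations (i.e., R'[X ∩ Y] = S'[X ∩ Y]) and R ⋈ S ≡ S ⋈ R; (d) R ≡ (R ⋈ S)[X] and S ≡ (R ⋈ S)[Y] (i.e., the join R ⋈ S witnesses the consistency of R and S). -/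
open Finsupp

variable {A : Type*} [DecidableEq A]

section Helpers

variable {dom : A → Type*} {K : Type*}

open Classical in
theorem marg_apply [CommSemiring K] {X Y : Finset A} (h : Y ⊆ X) (R : Tup dom X →₀ K)
    (u : Tup dom Y) :
    marg h R u = ∑ t ∈ R.support.filter (fun t => restr dom h t = u), R t := by
  rw [marg, Finsupp.mapDomain, Finsupp.sum_apply, Finsupp.sum, Finset.sum_filter]
  refine Finset.sum_congr rfl fun t _ => ?_
  rw [Finsupp.single_apply]

theorem marg_marg [CommSemiring K] {X Y Z : Finset A} (h : Y ⊆ X) (h' : Z ⊆ Y) (h'' : Z ⊆ X)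
    (R : Tup dom X →₀ K) : marg h' (marg h R) = marg h'' R := by
  unfold marg
  rw [← Finsupp.mapDomain_comp]
  rfl

theorem KEquiv.marg [CommSemiring K] {X Y : Finset A} (h : Y ⊆ X) {R S : Tup dom X →₀ K}
    (e : KEquiv R S) : KEquiv (marg h R) (marg h S) := by
  obtain ⟨a, b, ha, hb, e⟩ := e
  refine ⟨a, b, ha, hb, fun u => ?_⟩
  have e' : a • R = b • S := by
    ext t
    simpa using e t
  have := congrArg (fun T => _root_.marg h T u) e'
  simpa [_root_.marg, Finsupp.mapDomain_smul] using this

theorem KEquiv.symm [CommSemiring K] {X : Finset A} {R S : Tup dom X →₀ K}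
    (e : KEquiv R S) : KEquiv S R := by
  obtain ⟨a, b, ha, hb, e⟩ := e
  exact ⟨b, a, hb, ha, fun t => (e t).symm⟩

theorem KEquiv.trans [CommSemiring K] [NoZeroDivisors K] {X : Finset A} {R S T : Tup dom X →₀ K}
    (e : KEquiv R S) (e' : KEquiv S T) : KEquiv R T := by
  obtain ⟨a, b, ha, hb, e⟩ := e
  obtain ⟨c, d, hc, hd, e'⟩ := e'
  refine ⟨c * a, b * d, mul_ne_zero hc ha, mul_ne_zero hb hd, fun t => ?_⟩
  rw [mul_assoc, e, mul_left_comm, e', mul_assoc]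

theorem sum_zero_pos [CommSemiring K] (hplus : ∀ a b : K, a + b = 0 → a = 0 ∧ b = 0)
    {ι : Type*} (s : Finset ι) (f : ι → K) (h : ∑ i ∈ s, f i = 0) : ∀ i ∈ s, f i = 0 := by
  classical
  intro i hi
  rw [← Finset.add_sum_erase s f hi] at h
  exact (hplus _ _ h).1

theorem marg_zero [CommSemiring K] (hplus : ∀ a b : K, a + b = 0 → a = 0 ∧ b = 0)
    {X Y : Finset A} (h : Y ⊆ X) (R : Tup dom X →₀ K) (t : Tup dom X)
    (h0 : marg h R (restr dom h t) = 0) : R t = 0 := by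
  classical
  by_contra hne
  rw [marg_apply] at h0
  exact hne (sum_zero_pos hplus _ _ h0 t (by simp [hne]))

theorem image_support [CommSemiring K] (hplus : ∀ a b : K, a + b = 0 → a = 0 ∧ b = 0)
    {X Y : Finset A} (h : Y ⊆ X) (R : Tup dom X →₀ K) :
    restr dom h '' (R.support : Set (Tup dom X)) = ((marg h R).support : Set (Tup dom Y)) := by
  classical
  ext u
  constructor
  · rintro ⟨t, ht, rfl⟩
    simp only [Finset.mem_coe, Finsupp.mem_support_iff] at ht ⊢
    exact fun h0 => ht (marg_zero hplus h R t h0)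
  · intro hu
    simp only [Finset.mem_coe, Finsupp.mem_support_iff, marg_apply] at hu
    obtain ⟨t, ht, -⟩ := Finset.exists_ne_zero_of_sum_ne_zero hu
    rw [Finset.mem_filter] at ht
    exact ⟨t, ht.1, ht.2⟩

theorem marg_mul_cFactor [CommSemiring K] {Y Z : Finset A} (h : Z ⊆ Y) (S : Tup dom Y →₀ K)
    (u : Tup dom Z) (hu : marg h S u ≠ 0) :
    marg h S u * cFactor h S u = ∏ v ∈ (marg h S).support, marg h S v := by
  classical
  rw [cFactor]
  convert Finset.mul_prod_erase (marg h S).support (marg h S) (Finsupp.mem_support_iff.2 hu)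

theorem prod_marg_ne_zero [CommSemiring K] [Nontrivial K] [NoZeroDivisors K] {Y Z : Finset A}
    (h : Z ⊆ Y) (S : Tup dom Y →₀ K) : ∏ v ∈ (marg h S).support, marg h S v ≠ 0 :=
  Finset.prod_ne_zero_iff.2 fun _ hv => Finsupp.mem_support_iff.1 hv

theorem restr_merge_left {X Y : Finset A} (r : Tup dom X) (s : Tup dom Y) :
    restr dom Finset.subset_union_left (merge r s) = r := by
  funext a ha
  simp [restr, merge, ha]

theorem restr_merge_right {X Y : Finset A} (r : Tup dom X) (s : Tup dom Y)
    (h : restr dom (Finset.inter_subset_left : X ∩ Y ⊆ X) r =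
      restr dom (Finset.inter_subset_right : X ∩ Y ⊆ Y) s) :
    restr dom Finset.subset_union_right (merge r s) = s := by
  funext a ha
  by_cases hX : a ∈ X
  · have := congrFun (congrFun h a) (Finset.mem_inter.2 ⟨hX, ha⟩)
    simpa [restr, merge, hX] using this
  · simp [restr, merge, hX]

theorem tup_ext {X Y : Finset A} (t t' : Tup dom (X ∪ Y))
    (h1 : restr dom Finset.subset_union_left t = restr dom (Finset.subset_union_left) t')
    (h2 : restr dom Finset.subset_union_right t = restr dom (Finset.subset_union_right) t') :
    t = t' := by
  funext a ha
  rcases Finset.mem_union.1 ha with h | h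
  · exact congrFun (congrFun h1 a) h
  · exact congrFun (congrFun h2 a) h

theorem kjoin_apply [CommSemiring K] {X Y : Finset A} (R : Tup dom X →₀ K) (S : Tup dom Y →₀ K)
    (t : Tup dom (X ∪ Y)) : kjoin R S t = R (restr dom Finset.subset_union_left t) *
      S (restr dom Finset.subset_union_right t) *
      cFactor Finset.inter_subset_right S (restr dom Finset.inter_subset_union t) := rfl

theorem marg_kjoin_left [CommSemiring K] {X Y : Finset A} (R : Tup dom X →₀ K)
    (S : Tup dom Y →₀ K) (r : Tup dom X) (u : Tup dom (X ∩ Y))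
    (hu : restr dom Finset.inter_subset_left r = u) :
    marg Finset.subset_union_left (kjoin R S) r =
      R r * (marg Finset.inter_subset_right S u * cFactor Finset.inter_subset_right S u) := by
  classical
  rw [marg_apply, marg_apply, Finset.sum_mul, Finset.mul_sum]
  have key : ∀ t : Tup dom (X ∪ Y), restr dom Finset.subset_union_left t = r →
      kjoin R S t = R r * (S (restr dom Finset.subset_union_right t) *
        cFactor Finset.inter_subset_right S u) := by
    intro t ht
    have : restr dom Finset.inter_subset_union t = u := by rw [← hu, ← ht]; rfl
    rw [kjoin_apply, this, ht, mul_assoc]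
  refine Finset.sum_bij_ne_zero (fun t _ _ => restr dom Finset.subset_union_right t) ?_ ?_ ?_ ?_
  · intro t ht hne
    rw [Finset.mem_filter] at ht ⊢
    rw [key t ht.2] at hne
    refine ⟨Finsupp.mem_support_iff.2 (left_ne_zero_of_mul (right_ne_zero_of_mul hne)), ?_⟩
    rw [← hu, ← ht.2]; rfl
  · intro t ht _ t' ht' _ he
    rw [Finset.mem_filter] at ht ht'
    exact tup_ext t t' (ht.2.trans ht'.2.symm) he
  · intro s hs hne
    rw [Finset.mem_filter] at hs
    have h1 := restr_merge_left r s
    have h2 := restr_merge_right r s (hu.trans hs.2.symm)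
    have hne' : kjoin R S (merge r s) ≠ 0 := by rw [key _ h1, h2]; exact hne
    exact ⟨merge r s, Finset.mem_filter.2 ⟨Finsupp.mem_support_iff.2 hne', h1⟩, hne', h2⟩
  · intro t ht _
    exact key t (Finset.mem_filter.1 ht).2

theorem marg_kjoin_right [CommSemiring K] {X Y : Finset A} (R : Tup dom X →₀ K)
    (S : Tup dom Y →₀ K) (s : Tup dom Y) (u : Tup dom (X ∩ Y))
    (hu : restr dom Finset.inter_subset_right s = u) :
    marg Finset.subset_union_right (kjoin R S) s =
      S s * (marg Finset.inter_subset_left R u * cFactor Finset.inter_subset_right S u) := by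
  classical
  rw [marg_apply, marg_apply, Finset.sum_mul, Finset.mul_sum]
  have key : ∀ t : Tup dom (X ∪ Y), restr dom Finset.subset_union_right t = s →
      kjoin R S t = S s * (R (restr dom Finset.subset_union_left t) *
        cFactor Finset.inter_subset_right S u) := by
    intro t ht
    have : restr dom Finset.inter_subset_union t = u := by rw [← hu, ← ht]; rfl
    rw [kjoin_apply, this, ht, mul_comm (R _), mul_assoc]
  refine Finset.sum_bij_ne_zero (fun t _ _ => restr dom Finset.subset_union_left t) ?_ ?_ ?_ ?_
  · intro t ht hne
    rw [Finset.mem_filter] at ht ⊢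
    rw [key t ht.2] at hne
    refine ⟨Finsupp.mem_support_iff.2 (left_ne_zero_of_mul (right_ne_zero_of_mul hne)), ?_⟩
    rw [← hu, ← ht.2]; rfl
  · intro t ht _ t' ht' _ he
    rw [Finset.mem_filter] at ht ht'
    exact tup_ext t t' he (ht.2.trans ht'.2.symm)
  · intro r hr hne
    rw [Finset.mem_filter] at hr
    have h1 := restr_merge_left r s
    have h2 := restr_merge_right r s (hr.2.trans hu.symm)
    have hne' : kjoin R S (merge r s) ≠ 0 := by rw [key _ h2, h1]; exact hne
    exact ⟨merge r s, Finset.mem_filter.2 ⟨Finsupp.mem_support_iff.2 hne', h2⟩, hne', h1⟩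
  · intro t ht _
    exact key t (Finset.mem_filter.1 ht).2

theorem marg_eq [CommSemiring K] {X Y : Finset A} (e : X = Y) (h : Y ⊆ X) (h' : X ⊆ Y)
    (T : Tup dom X →₀ K) (t : Tup dom Y) : marg h T t = T (restr dom h' t) := by
  subst e
  exact congrArg (fun f : Tup dom X →₀ K => f t) (Finsupp.mapDomain_id (v := T))

theorem cFactor_eq [CommSemiring K] {X Z Z' : Finset A} (e : Z = Z') (h : Z ⊆ X) (h' : Z' ⊆ X)
    (hz : Z' ⊆ Z) (R : Tup dom X →₀ K) (u : Tup dom Z) :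
    cFactor h R u = cFactor h' R (restr dom hz u) := by
  subst e
  rfl

theorem kjoin_swap [CommSemiring K] {X Y : Finset A} (R : Tup dom X →₀ K) (S : Tup dom Y →₀ K)
    (t : Tup dom (X ∪ Y)) : marg ((Finset.union_comm X Y).le) (kjoin S R) t =
      R (restr dom Finset.subset_union_left t) *
      S (restr dom Finset.subset_union_right t) *
      cFactor Finset.inter_subset_left R (restr dom Finset.inter_subset_union t) := by
  rw [marg_eq (Finset.union_comm Y X) _ (Finset.union_comm Y X).le, kjoin_apply,
    cFactor_eq (Finset.inter_comm Y X) _ Finset.inter_subset_left (Finset.inter_comm X Y).le,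
    mul_comm (S _)]
  rfl

theorem marg_mul_marg [CommSemiring K] {X Y Z : Finset A} (hX : Z ⊆ X) (hY : Z ⊆ Y)
    (R : Tup dom X →₀ K) (S : Tup dom Y →₀ K) (u : Tup dom Z) (p q : K)
    (h : ∀ r s, restr dom hX r = u → restr dom hY s = u → p * (R r * S s) = q * (R r * S s)) :
    p * (marg hX R u * marg hY S u) = q * (marg hX R u * marg hY S u) := by
  classical
  rw [marg_apply, marg_apply, Finset.sum_mul_sum, Finset.mul_sum, Finset.mul_sum]
  refine Finset.sum_congr rfl fun r hr => ?_
  rw [Finset.mul_sum, Finset.mul_sum]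
  refine Finset.sum_congr rfl fun s hs => ?_
  exact h r s (Finset.mem_filter.1 hr).2 (Finset.mem_filter.1 hs).2

end Helpers

/-- Characterizations of consistency of two K-relations over a positive semiring:
(a) consistency; (b) equivalent marginals on the common attributes; (c) consistent supports
plus commutativity of the join up to equivalence; (d) the join witnesses the consistency. -/
theorem statement6 {A : Type*} [DecidableEq A] (dom : A → Type*) (K : Type*)
    [CommSemiring K] [Nontrivial K] [NoZeroDivisors K]
    (hplus : ∀ a b : K, a + b = 0 → a = 0 ∧ b = 0)
    (X Y : Finset A) (R : Tup dom X →₀ K) (S : Tup dom Y →₀ K) :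
    (Consistent R S ↔
      KEquiv (marg (Finset.inter_subset_left : X ∩ Y ⊆ X) R)
        (marg (Finset.inter_subset_right : X ∩ Y ⊆ Y) S)) ∧
    (Consistent R S ↔
      (restr dom (Finset.inter_subset_left : X ∩ Y ⊆ X) '' (R.support : Set (Tup dom X)) =
        restr dom (Finset.inter_subset_right : X ∩ Y ⊆ Y) '' (S.support : Set (Tup dom Y)) ∧
       KEquiv (kjoin R S) (marg ((Finset.union_comm X Y).le) (kjoin S R)))) ∧
    (Consistent R S ↔
      (KEquiv R (marg Finset.subset_union_left (kjoin R S)) ∧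
       KEquiv S (marg Finset.subset_union_right (kjoin R S)))) := by
  have hab : Consistent R S → KEquiv (marg (Finset.inter_subset_left : X ∩ Y ⊆ X) R)
        (marg (Finset.inter_subset_right : X ∩ Y ⊆ Y) S) := by
    rintro ⟨T, h1, h2⟩
    have h1' := h1.marg (Finset.inter_subset_left : X ∩ Y ⊆ X)
    have h2' := h2.marg (Finset.inter_subset_right : X ∩ Y ⊆ Y)
    rw [marg_marg _ _ Finset.inter_subset_union] at h1' h2'
    exact h1'.symm.trans h2'
  have hda : (KEquiv R (marg Finset.subset_union_left (kjoin R S)) ∧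
       KEquiv S (marg Finset.subset_union_right (kjoin R S))) → Consistent R S :=
    fun h => ⟨kjoin R S, h.1.symm, h.2.symm⟩
  have hbd : KEquiv (marg (Finset.inter_subset_left : X ∩ Y ⊆ X) R)
        (marg (Finset.inter_subset_right : X ∩ Y ⊆ Y) S) →
      (KEquiv R (marg Finset.subset_union_left (kjoin R S)) ∧
       KEquiv S (marg Finset.subset_union_right (kjoin R S))) := by
    rintro ⟨a, b, ha, hb, e⟩
    have hP := prod_marg_ne_zero (Finset.inter_subset_right : X ∩ Y ⊆ Y) S
    constructor
    · refine ⟨_, 1, hP, one_ne_zero, fun r => ?_⟩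
      rw [marg_kjoin_left R S r _ rfl, one_mul]
      by_cases h0 : marg (Finset.inter_subset_right : X ∩ Y ⊆ Y) S
          (restr dom Finset.inter_subset_left r) = 0
      · have h1 := e (restr dom Finset.inter_subset_left r)
        rw [h0, mul_zero] at h1
        rw [marg_zero hplus _ R r ((mul_eq_zero.1 h1).resolve_left ha), mul_zero, zero_mul]
      · rw [marg_mul_cFactor _ _ _ h0, mul_comm]
    · refine ⟨_, a, mul_ne_zero hb hP, ha, fun s => ?_⟩
      rw [marg_kjoin_right R S s _ rfl]
      by_cases h0 : marg (Finset.inter_subset_right : X ∩ Y ⊆ Y) S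
          (restr dom Finset.inter_subset_right s) = 0
      · rw [marg_zero hplus _ S s h0, mul_zero, zero_mul, mul_zero]
      · rw [← marg_mul_cFactor _ _ _ h0, mul_left_comm a, ← mul_assoc a, e]
        ring
  have hbc : KEquiv (marg (Finset.inter_subset_left : X ∩ Y ⊆ X) R)
        (marg (Finset.inter_subset_right : X ∩ Y ⊆ Y) S) →
      (restr dom (Finset.inter_subset_left : X ∩ Y ⊆ X) '' (R.support : Set (Tup dom X)) =
        restr dom (Finset.inter_subset_right : X ∩ Y ⊆ Y) '' (S.support : Set (Tup dom Y)) ∧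
       KEquiv (kjoin R S) (marg ((Finset.union_comm X Y).le) (kjoin S R))) := by
    classical
    rintro ⟨a, b, ha, hb, e⟩
    have hsupp : (marg (Finset.inter_subset_left : X ∩ Y ⊆ X) R).support =
        (marg (Finset.inter_subset_right : X ∩ Y ⊆ Y) S).support := by
      ext u
      have := e u
      rw [Finsupp.mem_support_iff, Finsupp.mem_support_iff, not_iff_not]
      constructor
      · intro h0
        rw [h0, mul_zero] at this
        exact (mul_eq_zero.1 this.symm).resolve_left hb
      · intro h0
        rw [h0, mul_zero] at this
        exact (mul_eq_zero.1 this).resolve_left ha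
    refine ⟨by rw [image_support hplus, image_support hplus, hsupp], ?_⟩
    let n := (marg (Finset.inter_subset_right : X ∩ Y ⊆ Y) S).support.card - 1
    refine ⟨b ^ n, a ^ n, pow_ne_zero _ hb, pow_ne_zero _ ha, fun t => ?_⟩
    rw [kjoin_swap, kjoin_apply]
    by_cases h0 : marg (Finset.inter_subset_right : X ∩ Y ⊆ Y) S
          (restr dom Finset.inter_subset_union t) = 0
    · have : S (restr dom Finset.subset_union_right t) = 0 := marg_zero hplus _ S _ h0
      simp [this]
    · have hc : b ^ n * cFactor (Finset.inter_subset_right : X ∩ Y ⊆ Y) S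
            (restr dom Finset.inter_subset_union t) =
          a ^ n * cFactor (Finset.inter_subset_left : X ∩ Y ⊆ X) R
            (restr dom Finset.inter_subset_union t) := by
        have hcard := Finset.card_erase_of_mem (Finsupp.mem_support_iff.2 h0)
        unfold cFactor
        rw [hsupp]
        have : n = _ := hcard.symm
        rw [this]
        simp only [← Finset.prod_const]
        have hp := Finset.prod_congr (rfl : (marg (Finset.inter_subset_right : X ∩ Y ⊆ Y) S).support.erase
          (restr dom Finset.inter_subset_union t) = _) (fun v _ => (e v).symm)
        rw [Finset.prod_mul_distrib, Finset.prod_mul_distrib] at hp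
        convert hp
      rw [mul_left_comm, hc, mul_left_comm]
  have hcb : (restr dom (Finset.inter_subset_left : X ∩ Y ⊆ X) '' (R.support : Set (Tup dom X)) =
        restr dom (Finset.inter_subset_right : X ∩ Y ⊆ Y) '' (S.support : Set (Tup dom Y)) ∧
       KEquiv (kjoin R S) (marg ((Finset.union_comm X Y).le) (kjoin S R))) →
      KEquiv (marg (Finset.inter_subset_left : X ∩ Y ⊆ X) R)
        (marg (Finset.inter_subset_right : X ∩ Y ⊆ Y) S) := by
    rintro ⟨hs, a, b, ha, hb, e⟩
    rw [image_support hplus, image_support hplus, Finset.coe_inj] at hs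
    have hPS := prod_marg_ne_zero (Finset.inter_subset_right : X ∩ Y ⊆ Y) S
    have hPR := prod_marg_ne_zero (Finset.inter_subset_left : X ∩ Y ⊆ X) R
    refine ⟨_, _, mul_ne_zero ha hPS, mul_ne_zero hb hPR, fun u => ?_⟩
    by_cases h0 : marg (Finset.inter_subset_right : X ∩ Y ⊆ Y) S u = 0
    · have h1 : marg (Finset.inter_subset_left : X ∩ Y ⊆ X) R u = 0 := by
        rwa [← Finsupp.notMem_support_iff, hs, Finsupp.notMem_support_iff]
      rw [h0, h1, mul_zero, mul_zero]
    · have h1 : marg (Finset.inter_subset_left : X ∩ Y ⊆ X) R u ≠ 0 := by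
        rwa [← Finsupp.mem_support_iff, hs, Finsupp.mem_support_iff]
      have := marg_mul_marg Finset.inter_subset_left Finset.inter_subset_right R S u
        (a * cFactor (Finset.inter_subset_right : X ∩ Y ⊆ Y) S u)
        (b * cFactor (Finset.inter_subset_left : X ∩ Y ⊆ X) R u) (by
          intro r s hr hs'
          have h2 := e (merge r s)
          have hz : restr dom (Finset.inter_subset_union : X ∩ Y ⊆ X ∪ Y) (merge r s) = u := by
            rw [← hr]
            nth_rewrite 2 [← restr_merge_left r s]
            rfl
          rw [kjoin_swap, kjoin_apply, hz, restr_merge_left,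
            restr_merge_right r s (hr.trans hs'.symm)] at h2
          calc _ = _ := by ring
            _ = _ := h2
            _ = _ := by ring)
      rw [← marg_mul_cFactor _ _ _ h0, ← marg_mul_cFactor _ _ _ h1]
      calc _ = _ := by ring
        _ = _ := this
        _ = _ := by ring
  exact ⟨⟨hab, fun h => hda (hbd h)⟩, ⟨fun h => hbc (hab h), fun h => hda (hbd (hcb h))⟩,
    ⟨fun h => hbd (hab h), hda⟩⟩
end

section
/- Let R be a probability distribution over a finite set X of attributes and S a probability distribution over a finite set Y of attributes, let Z = X ∩ Y, and suppose R and S are consistent, i.e., there is a probability distribution T over X ∪ Y with T[X] = R and T[Y] = S. Define the probability distribution R ⋈_P S over X ∪ Y by (R ⋈_P S)(t) = R(t[X])·S(t[Y])/S[Z](t[Z]) (with the convention 0/0 = 0). Let W(R,S) be the set of all probability distributions T over X ∪ Y with T[X] = R and T[Y] = S. Then R ⋈_P S belongs to W(R,S), every P ∈ W(R,S) satisfies H(P) ≤ H(R ⋈_P S), and any P ∈ W(R,S) with H(P) = H(R ⋈_P S) equals R ⋈_P S; that is, R ⋈_P S is the unique maximizer of Shannon entropy in W(R,S). -/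
open Finsupp

variable {A : Type*} [DecidableEq A]

/-- The probabilistic join: `(R ⋈_P S)(t) = R(t[X])·S(t[Y])/S[Z](t[Z])` with `0/0 = 0`
(division in the nonnegative reals is total, with zero denominator giving `0`). -/
noncomputable def joinP {A : Type*} [DecidableEq A] {dom : A → Type*} {X Y : Finset A}
    (R : Tup dom X →₀ NNReal) (S : Tup dom Y →₀ NNReal) : Tup dom (X ∪ Y) →₀ NNReal :=
  haveI := Classical.decEq (Tup dom (X ∪ Y))
  Finsupp.onFinset ((R.support ×ˢ S.support).image fun p => merge p.1 p.2)
    (fun t => R (restr dom Finset.subset_union_left t) *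
      S (restr dom Finset.subset_union_right t) /
      marg (Finset.inter_subset_right : X ∩ Y ⊆ Y) S (restr dom Finset.inter_subset_union t))
    (by
      intro t ht
      have h1 : R (restr dom Finset.subset_union_left t) *
          S (restr dom Finset.subset_union_right t) ≠ 0 := by
        intro h
        apply ht
        show R _ * S _ / _ = 0
        rw [h, zero_div]
      have hR := left_ne_zero_of_mul h1
      have hS := right_ne_zero_of_mul h1
      refine Finset.mem_image.mpr ⟨(restr dom Finset.subset_union_left t,
        restr dom Finset.subset_union_right t),
        Finset.mem_product.mpr ⟨Finsupp.mem_support_iff.mpr hR,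
          Finsupp.mem_support_iff.mpr hS⟩, ?_⟩
      funext a ha
      by_cases h : a ∈ X <;> simp [merge, restr, h])

/-- Shannon entropy of a finitely supported nonnegative real valued relation. -/
noncomputable def entropy {A : Type*} [DecidableEq A] {dom : A → Type*} {X : Finset A}
    (P : Tup dom X →₀ NNReal) : ℝ :=
  -∑ t ∈ P.support, (P t : ℝ) * Real.logb 2 (P t)


section Aux

theorem aux_mapDomain_apply {T α : Type*} (f : T → α) (P : T →₀ NNReal) (a : α) [DecidableEq α] :
    Finsupp.mapDomain f P a = ∑ t ∈ P.support with f t = a, P t := by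
  rw [Finsupp.mapDomain, Finsupp.sum, Finsupp.finsetSum_apply, Finset.sum_filter]
  refine Finset.sum_congr rfl fun t _ => ?_
  rw [Finsupp.single_apply]

theorem aux_le {T α : Type*} (f : T → α) (P : T →₀ NNReal) (t : T) :
    P t ≤ Finsupp.mapDomain f P (f t) := by
  classical
  rw [aux_mapDomain_apply]
  by_cases h : P t = 0
  · rw [h]; exact zero_le
  · exact Finset.single_le_sum (f := fun t => P t) (fun _ _ => zero_le)
      (Finset.mem_filter.mpr ⟨Finsupp.mem_support_iff.mpr h, rfl⟩)

theorem aux_marg {T α β γ : Type*} (p : T → α) (q : T → β) (r : α → γ) (s : β → γ)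
    (hc : ∀ t, r (p t) = s (q t))
    (hinj : ∀ t t', p t = p t' → q t = q t' → t = t')
    (hex : ∀ a b, r a = s b → ∃ t, p t = a ∧ q t = b)
    (R : α →₀ NNReal) (S : β →₀ NNReal)
    (hZ : Finsupp.mapDomain r R = Finsupp.mapDomain s S)
    (J : T →₀ NNReal)
    (hJ : ∀ t, J t = R (p t) * S (q t) / Finsupp.mapDomain s S (r (p t))) :
    Finsupp.mapDomain p J = R := by
  classical
  ext1 a
  rw [aux_mapDomain_apply]
  by_cases ha : R a = 0
  · rw [ha]
    refine Finset.sum_eq_zero fun t ht => ?_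
    rw [hJ, (Finset.mem_filter.mp ht).2, ha]; simp
  have hpos : Finsupp.mapDomain s S (r a) ≠ 0 := by
    intro h
    have := aux_le r R a
    rw [hZ, h] at this
    exact ha (le_antisymm this zero_le)
  have key : ∑ t ∈ J.support with p t = a, J t
      = ∑ b ∈ S.support with s b = r a, R a * S b / Finsupp.mapDomain s S (r a) := by
    refine Finset.sum_bij (fun t _ => q t) ?_ ?_ ?_ ?_
    · intro t ht
      obtain ⟨h1, h2⟩ := Finset.mem_filter.mp ht
      refine Finset.mem_filter.mpr ⟨?_, by rw [← h2, hc]⟩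
      rw [Finsupp.mem_support_iff] at h1 ⊢
      intro h
      apply h1
      rw [hJ, h]; simp
    · intro t ht t' ht' h
      exact hinj _ _ ((Finset.mem_filter.mp ht).2.trans (Finset.mem_filter.mp ht').2.symm) h
    · intro b hb
      obtain ⟨h1, h2⟩ := Finset.mem_filter.mp hb
      obtain ⟨t, rfl, rfl⟩ := hex a b h2.symm
      refine ⟨t, Finset.mem_filter.mpr ⟨?_, rfl⟩, rfl⟩
      rw [Finsupp.mem_support_iff] at h1 ⊢
      rw [hJ]
      exact div_ne_zero (mul_ne_zero ha h1) hpos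
    · intro t ht
      rw [hJ, (Finset.mem_filter.mp ht).2]
  rw [key, ← Finset.sum_div, ← Finset.mul_sum, ← aux_mapDomain_apply s S (r a),
    mul_div_assoc, div_self hpos, mul_one]

theorem aux_sum {T α : Type*} (f : T → α) (P : T →₀ NNReal) (g : α → ℝ) :
    (Finsupp.mapDomain f P).sum (fun a x => (x : ℝ) * g a)
      = ∑ t ∈ P.support, (P t : ℝ) * g (f t) := by
  rw [Finsupp.sum_mapDomain_index]
  · rfl
  · intro b; simp
  · intro b x y; push_cast; ring

theorem aux_gibbs (x y : NNReal) (h : y = 0 → x = 0) :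
    (x : ℝ) * Real.log y - x * Real.log x ≤ y - x ∧
    ((x : ℝ) * Real.log y - x * Real.log x = y - x → x = y) := by
  by_cases hx : x = 0
  · subst hx
    simp only [NNReal.coe_zero, zero_mul, sub_zero]
    refine ⟨y.coe_nonneg, fun h => ?_⟩
    exact_mod_cast h
  have hy : y ≠ 0 := fun hy => hx (h hy)
  have hx' : (0 : ℝ) < x := by exact_mod_cast pos_iff_ne_zero.mpr hx
  have hy' : (0 : ℝ) < y := by exact_mod_cast pos_iff_ne_zero.mpr hy
  have e : (x : ℝ) * Real.log y - x * Real.log x = x * Real.log (y / x) := by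
    rw [Real.log_div hy'.ne' hx'.ne']; ring
  have e2 : (y : ℝ) - x = x * (y / x - 1) := by field_simp
  rw [e, e2]
  refine ⟨mul_le_mul_of_nonneg_left (Real.log_le_sub_one_of_pos (div_pos hy' hx')) hx'.le, ?_⟩
  intro h
  by_contra hne
  have h1 : (y : ℝ) / x ≠ 1 := by
    intro h1
    rw [div_eq_one_iff_eq hx'.ne'] at h1
    exact hne (by exact_mod_cast h1.symm)
  exact absurd (mul_left_cancel₀ hx'.ne' h)
    (Real.log_lt_sub_one_of_pos (div_pos hy' hx') h1).ne

theorem aux_cross {T α β γ : Type*} (p : T → α) (q : T → β) (r : α → γ)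
    (R : α →₀ NNReal) (S : β →₀ NNReal) (c : γ → NNReal) (J : T →₀ NNReal)
    (hJ : ∀ t, J t = R (p t) * S (q t) / c (r (p t)))
    (P : T →₀ NNReal) (hP : ∀ t, J t = 0 → P t = 0)
    (hPR : Finsupp.mapDomain p P = R) (hPS : Finsupp.mapDomain q P = S) :
    ∑ t ∈ P.support, (P t : ℝ) * Real.log (J t) =
      R.sum (fun a x => (x : ℝ) * (Real.log (R a) - Real.log (c (r a))))
        + S.sum (fun b x => (x : ℝ) * Real.log (S b)) := by
  have h1 := aux_sum p P (fun a => Real.log (R a) - Real.log (c (r a)))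
  have h2 := aux_sum q P (fun b => Real.log (S b))
  rw [hPR] at h1
  rw [hPS] at h2
  rw [h1, h2, ← Finset.sum_add_distrib]
  refine Finset.sum_congr rfl fun t ht => ?_
  have hj : J t ≠ 0 := fun h => Finsupp.mem_support_iff.mp ht (hP t h)
  rw [hJ] at hj
  have hc : c (r (p t)) ≠ 0 := fun h => hj (by rw [h, div_zero])
  have hm : R (p t) * S (q t) ≠ 0 := fun h => hj (by rw [h, zero_div])
  have hr := left_ne_zero_of_mul hm
  have hs := right_ne_zero_of_mul hm
  rw [hJ]
  push_cast
  rw [Real.log_div, Real.log_mul]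
  · ring
  all_goals first
    | exact_mod_cast hr
    | exact_mod_cast hs
    | exact_mod_cast hc
    | exact_mod_cast hm

theorem aux_max {T : Type*} (J P : T →₀ NNReal) (hP : ∀ t, J t = 0 → P t = 0)
    (hJ1 : ∑ t ∈ J.support, J t = 1) (hP1 : ∑ t ∈ P.support, P t = 1)
    (hcr : ∑ t ∈ P.support, (P t : ℝ) * Real.log (J t)
      = ∑ t ∈ J.support, (J t : ℝ) * Real.log (J t)) :
    ∑ t ∈ J.support, (J t : ℝ) * Real.log (J t) ≤ ∑ t ∈ P.support, (P t : ℝ) * Real.log (P t) ∧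
    (∑ t ∈ P.support, (P t : ℝ) * Real.log (P t) = ∑ t ∈ J.support, (J t : ℝ) * Real.log (J t)
      → P = J) := by
  have hsub : P.support ⊆ J.support := by
    intro t ht
    rw [Finsupp.mem_support_iff] at ht ⊢
    exact fun h => ht (hP t h)
  have ext : ∀ g : T → ℝ, ∑ t ∈ P.support, (P t : ℝ) * g t = ∑ t ∈ J.support, (P t : ℝ) * g t := by
    intro g
    refine Finset.sum_subset hsub fun t _ ht => ?_
    rw [Finsupp.notMem_support_iff.mp ht]; simp
  have hP1' : ∑ t ∈ J.support, (P t : ℝ) = 1 := by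
    have := ext (fun _ => 1)
    simp only [mul_one] at this
    rw [← this]; exact_mod_cast hP1
  have hJ1' : ∑ t ∈ J.support, (J t : ℝ) = 1 := by exact_mod_cast hJ1
  have hd : ∑ t ∈ J.support, ((J t : ℝ) - P t) = 0 := by
    rw [Finset.sum_sub_distrib, hP1', hJ1', sub_self]
  have hle : ∀ t ∈ J.support, (P t : ℝ) * Real.log (J t) - P t * Real.log (P t) ≤ J t - P t :=
    fun t _ => (aux_gibbs (P t) (J t) (hP t)).1
  rw [← hcr, ext (fun t => Real.log (J t)), ext (fun t => Real.log (P t))]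
  constructor
  · have := Finset.sum_le_sum hle
    rw [hd, Finset.sum_sub_distrib] at this
    linarith
  · intro h
    have heq : ∑ t ∈ J.support, ((P t : ℝ) * Real.log (J t) - P t * Real.log (P t))
        = ∑ t ∈ J.support, ((J t : ℝ) - P t) := by
      rw [hd, Finset.sum_sub_distrib, h, sub_self]
    have hall := (Finset.sum_eq_sum_iff_of_le hle).mp heq
    ext1 t
    by_cases ht : J t = 0
    · rw [ht, hP t ht]
    · exact (aux_gibbs (P t) (J t) (hP t)).2 (hall t (Finsupp.mem_support_iff.mpr ht))

theorem aux_total {T α : Type*} (f : T → α) (P : T →₀ NNReal) :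
    ∑ t ∈ P.support, P t = ∑ a ∈ (Finsupp.mapDomain f P).support, Finsupp.mapDomain f P a := by
  have := Finsupp.sum_mapDomain_index (f := f) (s := P) (h := fun _ x => x)
    (fun _ => rfl) (fun _ _ _ => rfl)
  exact this.symm

theorem aux_entropy {A : Type*} [DecidableEq A] {dom : A → Type*} {X : Finset A}
    (P : Tup dom X →₀ NNReal) :
    entropy P = -(∑ t ∈ P.support, (P t : ℝ) * Real.log (P t)) / Real.log 2 := by
  rw [entropy, neg_div, Finset.sum_div]
  simp only [Real.logb, mul_div_assoc]

end Aux

/-- For consistent probability distributions, the probabilistic join is the unique maximizer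
of Shannon entropy among all probability distributions witnessing the consistency. -/
theorem statement7 {A : Type*} [DecidableEq A] (dom : A → Type*)
    (X Y : Finset A) (R : Tup dom X →₀ NNReal) (S : Tup dom Y →₀ NNReal)
    (hR : ∑ t ∈ R.support, R t = 1) (hS : ∑ t ∈ S.support, S t = 1)
    (hcons : ∃ T : Tup dom (X ∪ Y) →₀ NNReal, (∑ t ∈ T.support, T t = 1) ∧
      marg Finset.subset_union_left T = R ∧ marg Finset.subset_union_right T = S) :
    ((∑ t ∈ (joinP R S).support, joinP R S t = 1) ∧
      marg Finset.subset_union_left (joinP R S) = R ∧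
      marg Finset.subset_union_right (joinP R S) = S) ∧
    (∀ P : Tup dom (X ∪ Y) →₀ NNReal, (∑ t ∈ P.support, P t = 1) →
      marg Finset.subset_union_left P = R → marg Finset.subset_union_right P = S →
      entropy P ≤ entropy (joinP R S)) ∧
    (∀ P : Tup dom (X ∪ Y) →₀ NNReal, (∑ t ∈ P.support, P t = 1) →
      marg Finset.subset_union_left P = R → marg Finset.subset_union_right P = S →
      entropy P = entropy (joinP R S) → P = joinP R S) := by
  set p : Tup dom (X ∪ Y) → Tup dom X := restr dom Finset.subset_union_left with hp
  set q : Tup dom (X ∪ Y) → Tup dom Y := restr dom Finset.subset_union_right with hq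
  set r : Tup dom X → Tup dom (X ∩ Y) := restr dom Finset.inter_subset_left with hr
  set s : Tup dom Y → Tup dom (X ∩ Y) := restr dom Finset.inter_subset_right with hs
  have hc : ∀ t, r (p t) = s (q t) := fun t => rfl
  have hinj : ∀ t t', p t = p t' → q t = q t' → t = t' := by
    intro t t' h1 h2
    funext a ha
    rcases Finset.mem_union.mp ha with h | h
    · exact congrFun (congrFun h1 a) h
    · exact congrFun (congrFun h2 a) h
  have hex : ∀ a b, r a = s b → ∃ t, p t = a ∧ q t = b := by
    intro a b h
    refine ⟨merge a b, ?_, ?_⟩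
    · funext x hx
      simp [hp, restr, merge, hx]
    · funext y hy
      by_cases hx : y ∈ X
      · have := congrFun (congrFun h y) (Finset.mem_inter.mpr ⟨hx, hy⟩)
        simpa [hq, hr, hs, restr, merge, hx] using this
      · simp [hq, restr, merge, hx]
  have hZ : Finsupp.mapDomain r R = Finsupp.mapDomain s S := by
    obtain ⟨T, -, h1, h2⟩ := hcons
    rw [← h1, ← h2]
    simp only [marg]
    rw [← Finsupp.mapDomain_comp, ← Finsupp.mapDomain_comp]
    rfl
  have hJ : ∀ t, joinP R S t = R (p t) * S (q t) / Finsupp.mapDomain s S (r (p t)) :=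
    fun t => rfl
  have hJR : Finsupp.mapDomain p (joinP R S) = R :=
    aux_marg p q r s hc hinj hex R S hZ _ hJ
  have hJS : Finsupp.mapDomain q (joinP R S) = S := by
    refine aux_marg q p s r (fun t => (hc t).symm) (fun t t' h1 h2 => hinj t t' h2 h1)
      (fun b a h => ?_) S R hZ.symm _ ?_
    · obtain ⟨t, h1, h2⟩ := hex a b h.symm
      exact ⟨t, h2, h1⟩
    · intro t
      rw [hJ, hZ, hc, mul_comm]
  have hJ1 : ∑ t ∈ (joinP R S).support, joinP R S t = 1 := by
    rw [aux_total p, hJR, hR]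
  have main : ∀ P : Tup dom (X ∪ Y) →₀ NNReal, (∑ t ∈ P.support, P t = 1) →
      Finsupp.mapDomain p P = R → Finsupp.mapDomain q P = S →
      ∑ t ∈ (joinP R S).support, (joinP R S t : ℝ) * Real.log (joinP R S t)
        ≤ ∑ t ∈ P.support, (P t : ℝ) * Real.log (P t) ∧
      (∑ t ∈ P.support, (P t : ℝ) * Real.log (P t)
        = ∑ t ∈ (joinP R S).support, (joinP R S t : ℝ) * Real.log (joinP R S t)
        → P = joinP R S) := by
    intro P hP1 hPR hPS
    have hP : ∀ t, joinP R S t = 0 → P t = 0 := by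
      intro t ht
      by_contra hne
      have h1 : R (p t) ≠ 0 := by
        intro h
        have := aux_le p P t
        rw [hPR, h] at this
        exact hne (le_antisymm this zero_le)
      have h2 : S (q t) ≠ 0 := by
        intro h
        have := aux_le q P t
        rw [hPS, h] at this
        exact hne (le_antisymm this zero_le)
      have h3 : Finsupp.mapDomain s S (r (p t)) ≠ 0 := by
        intro h
        have := aux_le s S (q t)
        rw [← hc, h] at this
        exact h2 (le_antisymm this zero_le)
      rw [hJ] at ht
      exact div_ne_zero (mul_ne_zero h1 h2) h3 ht
    refine aux_max _ P hP hJ1 hP1 ?_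
    rw [aux_cross p q r R S _ _ hJ P hP hPR hPS,
      aux_cross p q r R S _ _ hJ _ (fun _ h => h) hJR hJS]
  have hlog : 0 < Real.log 2 := Real.log_pos (by norm_num)
  refine ⟨⟨hJ1, hJR, hJS⟩, ?_, ?_⟩
  · intro P h1 h2 h3
    rw [aux_entropy, aux_entropy]
    exact div_le_div_of_nonneg_right (neg_le_neg (main P h1 h2 h3).1) hlog.le
  · intro P h1 h2 h3 h
    rw [aux_entropy, aux_entropy, div_left_inj' hlog.ne', neg_inj] at h
    exact (main P h1 h2 h3).2 h
end

section
/- Let U be a finite set of attributes, let X and Y be subsets of U with X ∪ Y = U, and let P be an ordinary relation over U. If P satisfies the functional dependency X ∩ Y → X ∖ Y or P satisfies the functional dependency X ∩ Y → Y ∖ X, then the decomposition of P along X and Y is lossless-join, i.e., P = P[X] ⋈ P[Y]. -/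
open Finsupp

variable {A : Type*} [DecidableEq A]

/-- Two tuples over `U` agree on all attributes in `V`. -/
def agreeOn {A : Type*} [DecidableEq A] {dom : A → Type*} {U : Finset A} (V : Finset A)
    (t₁ t₂ : Tup dom U) : Prop :=
  ∀ a (ha : a ∈ U), a ∈ V → t₁ a ha = t₂ a ha

/-- An ordinary relation (a set of `U`-tuples) satisfies the functional dependency `V → W`
if any two of its tuples that agree on `V` also agree on `W`. -/
def SatisfiesFD {A : Type*} [DecidableEq A] {dom : A → Type*} {U : Finset A}
    (P : Finset (Tup dom U)) (V W : Finset A) : Prop :=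
  ∀ t₁ ∈ P, ∀ t₂ ∈ P, agreeOn V t₁ t₂ → agreeOn W t₁ t₂


/-- Lossless-join decompositions of ordinary relations: if a relation over `U = X ∪ Y`
satisfies one of the two functional dependencies, then it equals the join of its
projections on `X` and on `Y`. -/
theorem statement9 {A : Type*} [DecidableEq A] (dom : A → Type*)
    (U X Y : Finset A) (hXU : X ⊆ U) (hYU : Y ⊆ U) (hU : X ∪ Y = U)
    (P : Finset (Tup dom U))
    (hfd : SatisfiesFD P (X ∩ Y) (X \ Y) ∨ SatisfiesFD P (X ∩ Y) (Y \ X)) :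
    ∀ t : Tup dom U, t ∈ P ↔
      ((∃ s ∈ P, restr dom hXU s = restr dom hXU t) ∧
       (∃ s ∈ P, restr dom hYU s = restr dom hYU t)) := by
  intro t
  constructor
  · intro ht
    exact ⟨⟨t, ht, rfl⟩, ⟨t, ht, rfl⟩⟩
  · rintro ⟨⟨r, hr, hrt⟩, ⟨s, hs, hst⟩⟩
    have h1 : ∀ a (ha : a ∈ U), a ∈ X → r a ha = t a ha := fun a _ hX =>
      congrFun (congrFun hrt a) hX
    have h2 : ∀ a (ha : a ∈ U), a ∈ Y → s a ha = t a ha := fun a _ hY =>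
      congrFun (congrFun hst a) hY
    have hag : agreeOn (X ∩ Y) r s := fun a ha h =>
      (h1 a ha (Finset.mem_inter.mp h).1).trans (h2 a ha (Finset.mem_inter.mp h).2).symm
    rcases hfd with h | h
    · have h3 := h r hr s hs hag
      have : s = t := by
        funext a ha
        by_cases hY : a ∈ Y
        · exact h2 a ha hY
        · have hX : a ∈ X := (Finset.mem_union.mp (hU ▸ ha)).resolve_right hY
          exact (h3 a ha (Finset.mem_sdiff.mpr ⟨hX, hY⟩)).symm.trans (h1 a ha hX)
      exact this ▸ hs
    · have h3 := h r hr s hs hag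
      have : r = t := by
        funext a ha
        by_cases hX : a ∈ X
        · exact h1 a ha hX
        · have hY : a ∈ Y := (Finset.mem_union.mp (hU ▸ ha)).resolve_left hX
          exact (h3 a ha (Finset.mem_sdiff.mpr ⟨hY, hX⟩)).trans (h2 a ha hY)
      exact this ▸ hr
end
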